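/- If T is a subcubic tree, then γ_e(T) = γ*_{e,f}(T) if and only if T is the star K_{1,3}. -/

import Mathlib

open SimpleGraph Finset

variable {V : Type*}

/-- `(1/2)^(d-1)` for an extended natural `d`, with value `0` at `∞`. -/
noncomputable def halfPow (d : ℕ∞) : ℝ :=
  if d = ⊤ then 0 else 2 * (1 / 2 : ℝ) ^ d.toNat

/-- `(1/2)^(dist_G(u,v)-1)` using the ordinary graph distance. -/
noncomputable def expw (G : SimpleGraph V) (u v : V) : ℝ :=
  2 * (1 / 2 : ℝ) ^ G.dist u v

/-- The modified distance `dist_{(G,D)}(u,v)`: minimum length of a path from `u` to `v`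
whose only vertex in `D` is the endvertex `v` (`∞` if no such path exists). -/
noncomputable def mdist (G : SimpleGraph V) (D : Finset V) (u v : V) : ℕ∞ :=
  sInf ((fun p : G.Walk u v => (p.length : ℕ∞)) ''
    {p | p.IsPath ∧ v ∈ D ∧ ∀ w ∈ p.support, w ∈ D → w = v})

/-- `w_{(G,D)}(u)`. -/
noncomputable def wblock (G : SimpleGraph V) (D : Finset V) (u : V) : ℝ :=
  ∑ v ∈ D, halfPow (mdist G D u v)

/-- `w*_{(G,D)}(u)`. -/
noncomputable def wstar (G : SimpleGraph V) (D : Finset V) (u : V) : ℝ :=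
  ∑ v ∈ D, expw G u v

def IsExpDomSet (G : SimpleGraph V) (D : Finset V) : Prop :=
  ∀ u : V, 1 ≤ wblock G D u

def IsPorousExpDomSet (G : SimpleGraph V) (D : Finset V) : Prop :=
  ∀ u : V, 1 ≤ wstar G D u

def IsDomSet (G : SimpleGraph V) (D : Finset V) : Prop :=
  ∀ v : V, v ∉ D → ∃ u ∈ D, G.Adj u v

/-- The exponential domination number `γ_e(G)`. -/
noncomputable def gammaE (G : SimpleGraph V) [Fintype V] : ℕ :=
  sInf {k | ∃ D : Finset V, IsExpDomSet G D ∧ D.card = k}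

/-- The porous exponential domination number `γ*_e(G)`. -/
noncomputable def gammaEStar (G : SimpleGraph V) [Fintype V] : ℕ :=
  sInf {k | ∃ D : Finset V, IsPorousExpDomSet G D ∧ D.card = k}

/-- The domination number `γ(G)`. -/
noncomputable def gammaDom (G : SimpleGraph V) [Fintype V] : ℕ :=
  sInf {k | ∃ D : Finset V, IsDomSet G D ∧ D.card = k}

/-- Feasibility for the LP relaxation of porous exponential domination. -/
def FracFeasible (G : SimpleGraph V) [Fintype V] (x : V → ℝ) : Prop :=
  (∀ u, 0 ≤ x u) ∧ ∀ v : V, 1 ≤ ∑ u : V, expw G u v * x u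

/-- The fractional porous exponential domination number `γ*_{e,f}(G)`. -/
noncomputable def gammaEF (G : SimpleGraph V) [Fintype V] : ℝ :=
  sInf {s | ∃ x : V → ℝ, FracFeasible G x ∧ s = ∑ u : V, x u}

/-- A graph is subcubic if all degrees are at most `3`. -/
def Subcubic (G : SimpleGraph V) [Fintype V] [DecidableRel G.Adj] : Prop :=
  ∀ v : V, G.degree v ≤ 3

/-- In a tree, a vertex on a geodesic from `u` to `v` lies on every path from `u` to `v`. -/
lemma aux_mem_support {V : Type*} {G : SimpleGraph V} (hT : G.IsTree) {u v c : V}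
    (h : G.dist u c + G.dist c v = G.dist u v) (p : G.Walk u v) (hp : p.IsPath) :
    c ∈ p.support := by
  obtain ⟨q, hq⟩ := hT.connected.exists_walk_length_eq_dist u c
  obtain ⟨r, hr⟩ := hT.connected.exists_walk_length_eq_dist c v
  have h1 : (q.append r).length = G.dist u v := by
    rw [Walk.length_append, hq, hr, h]
  have h2 := (q.append r).isPath_of_length_eq_dist h1
  have h3 : p = q.append r := (hT.existsUnique_path u v).unique hp h2
  rw [h3, Walk.mem_support_append_iff]
  left; exact q.end_mem_support

/-- A vertex `u ≠ v` of a tree has exactly one neighbor closer to `v`. -/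
lemma aux_parent {V : Type*} {G : SimpleGraph V} (hT : G.IsTree) {u v : V} (huv : u ≠ v) :
    ∃ p, G.Adj u p ∧ G.dist v p + 1 = G.dist v u ∧
      ∀ w, G.Adj u w → w ≠ p → G.dist v w = G.dist v u + 1 := by
  obtain ⟨q, hq⟩ := hT.connected.exists_walk_length_eq_dist u v
  cases q with
  | nil => exact absurd rfl huv
  | @cons _ p _ hadj r =>
    have hp : G.dist v p + 1 = G.dist v u := by
      have h1 := dist_le r
      have h2 := hT.dist_eq_dist_add_one_of_adj v hadj
      rw [Walk.length_cons] at hq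
      rw [dist_comm] at hq h1
      omega
    refine ⟨p, hadj, hp, fun w hw hwp => ?_⟩
    rcases hT.dist_eq_dist_add_one_of_adj v hw with h | h
    · exfalso
      have hpath := (Walk.cons hadj r).isPath_of_length_eq_dist hq
      have hmem : w ∈ (Walk.cons hadj r).support := by
        apply aux_mem_support hT _ _ hpath
        have := dist_eq_one_iff_adj.2 hw
        rw [this, dist_comm, @dist_comm _ G u v, h, add_comm]
      have := hT.isAcyclic.eq_snd_of_adj_start hpath hw hmem
      simp at this
      exact hwp this
    · exact h

lemma aux_neighbor_sum {V : Type*} [Fintype V] {G : SimpleGraph V} [DecidableRel G.Adj]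
    (hT : G.IsTree) {u v : V} (huv : u ≠ v) :
    ∑ w ∈ G.neighborFinset u, (1 / 2 : ℝ) ^ G.dist v w =
      (1 / 2 : ℝ) ^ G.dist v u * (3 / 2 + G.degree u / 2) := by
  classical
  obtain ⟨p, hadj, hp, hall⟩ := aux_parent hT huv
  have hmem : p ∈ G.neighborFinset u := by simpa using hadj
  rw [← Finset.add_sum_erase _ _ hmem]
  have h1 : ∑ w ∈ (G.neighborFinset u).erase p, (1 / 2 : ℝ) ^ G.dist v w =
      ∑ w ∈ (G.neighborFinset u).erase p, (1 / 2 : ℝ) ^ (G.dist v u + 1) := by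
    apply Finset.sum_congr rfl
    intro w hw
    rw [Finset.mem_erase, mem_neighborFinset] at hw
    rw [hall w hw.2 hw.1]
  rw [h1, Finset.sum_const, Finset.card_erase_of_mem hmem, card_neighborFinset_eq_degree,
    ← hp, nsmul_eq_mul]
  have hpos : 1 ≤ G.degree u := by
    rw [← card_neighborFinset_eq_degree]; exact Finset.card_pos.2 ⟨p, hmem⟩
  push_cast [hpos]
  ring

lemma aux_identity {V : Type*} [Fintype V] {G : SimpleGraph V} [DecidableRel G.Adj]
    (hT : G.IsTree) (v : V) :
    ∑ u, (1 / 2 : ℝ) ^ G.dist v u * (3 - G.degree u) = 3 := by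
  classical
  have hsw : ∑ u, ∑ w ∈ G.neighborFinset u, (1 / 2 : ℝ) ^ G.dist v w =
      ∑ w, (1 / 2 : ℝ) ^ G.dist v w * G.degree w := by
    rw [Finset.sum_comm' (t' := univ) (s' := fun w => G.neighborFinset w)]
    · apply Finset.sum_congr rfl
      intro w _
      rw [Finset.sum_const, card_neighborFinset_eq_degree, nsmul_eq_mul, mul_comm]
    · intro x y; simp [adj_comm]
  have hL : ∑ u, ∑ w ∈ G.neighborFinset u, (1 / 2 : ℝ) ^ G.dist v w =
      ∑ u, ((1 / 2 : ℝ) ^ G.dist v u * (3 / 2 + G.degree u / 2) - if u = v then 3 / 2 else 0) := by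
    apply Finset.sum_congr rfl
    intro u _
    by_cases huv : u = v
    · subst huv
      have : ∑ w ∈ G.neighborFinset u, (1 / 2 : ℝ) ^ G.dist u w =
          ∑ w ∈ G.neighborFinset u, (1 / 2 : ℝ) := by
        apply Finset.sum_congr rfl
        intro w hw
        rw [mem_neighborFinset] at hw
        rw [dist_eq_one_iff_adj.2 hw, pow_one]
      rw [this, Finset.sum_const, card_neighborFinset_eq_degree, nsmul_eq_mul]
      simp
      ring
    · rw [aux_neighbor_sum hT huv]; simp [huv]
  rw [hsw, Finset.sum_sub_distrib, Finset.sum_ite_eq' univ v] at hL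
  simp only [Finset.mem_univ, if_true] at hL
  simp only [mul_add, mul_sub, Finset.sum_add_distrib, Finset.sum_sub_distrib] at hL ⊢
  have h1 : ∑ u, (1 / 2 : ℝ) ^ G.dist v u * (3 / 2) =
    (∑ u, (1 / 2 : ℝ) ^ G.dist v u * 3) / 2 := by
    rw [Finset.sum_div]; exact Finset.sum_congr rfl fun _ _ => by ring
  have h2 : ∑ u, (1 / 2 : ℝ) ^ G.dist v u * (G.degree u / 2) =
    (∑ u, (1 / 2 : ℝ) ^ G.dist v u * G.degree u) / 2 := by
    rw [Finset.sum_div]; exact Finset.sum_congr rfl fun _ _ => by ring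
  rw [h1, h2] at hL
  linarith

lemma expw_comm {V : Type*} (G : SimpleGraph V) (u v : V) : expw G u v = expw G v u := by
  unfold expw; rw [dist_comm]

lemma aux_identity' {V : Type*} [Fintype V] {G : SimpleGraph V} [DecidableRel G.Adj]
    (hT : G.IsTree) (v : V) :
    ∑ u, expw G u v * ((3 - G.degree u) / 6 : ℝ) = 1 := by
  have h := aux_identity hT v
  have : ∑ u, expw G u v * ((3 - G.degree u) / 6 : ℝ) =
      (∑ u, (1 / 2 : ℝ) ^ G.dist v u * (3 - G.degree u)) / 3 := by
    rw [Finset.sum_div]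
    refine Finset.sum_congr rfl fun u _ => ?_
    rw [expw_comm, expw]; ring
  rw [this, h]; norm_num

lemma aux_weight_sum {V : Type*} [Fintype V] {G : SimpleGraph V} [DecidableRel G.Adj]
    (hT : G.IsTree) :
    ∑ u : V, ((3 - G.degree u) / 6 : ℝ) = (Fintype.card V + 2) / 6 := by
  have h1 := G.sum_degrees_eq_twice_card_edges
  have h2 := hT.card_edgeFinset
  have h3 : ∑ v, (G.degree v : ℝ) = 2 * (#G.edgeFinset : ℝ) := by exact_mod_cast h1
  have h4 : (#G.edgeFinset : ℝ) + 1 = Fintype.card V := by exact_mod_cast h2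
  rw [← Finset.sum_div, Finset.sum_sub_distrib, h3]
  simp only [Finset.sum_const, Finset.card_univ, nsmul_eq_mul]
  linarith

/-- Weak duality identity. -/
lemma aux_duality {V : Type*} [Fintype V] {G : SimpleGraph V} [DecidableRel G.Adj]
    (hT : G.IsTree) (x : V → ℝ) :
    ∑ v, ((3 - G.degree v) / 6 : ℝ) * ∑ u, expw G u v * x u = ∑ u, x u := by
  simp only [Finset.mul_sum]
  rw [Finset.sum_comm]
  refine Finset.sum_congr rfl fun u _ => ?_
  have h := aux_identity' hT u
  calc _ = (∑ v, expw G v u * ((3 - G.degree v) / 6 : ℝ)) * x u := by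
        rw [Finset.sum_mul]
        refine Finset.sum_congr rfl fun v _ => ?_
        rw [expw_comm]; ring
    _ = _ := by rw [h, one_mul]

lemma aux_gammaEF {V : Type*} [Fintype V] {G : SimpleGraph V} [DecidableRel G.Adj]
    (hT : G.IsTree) (hsub : Subcubic G) :
    gammaEF G = ((Fintype.card V : ℝ) + 2) / 6 := by
  have hnn : ∀ u, (0 : ℝ) ≤ (3 - G.degree u) / 6 := by
    intro u
    have : (G.degree u : ℝ) ≤ 3 := by exact_mod_cast hsub u
    linarith
  apply IsLeast.csInf_eq
  constructor
  · refine ⟨fun u => (3 - G.degree u) / 6, ⟨hnn, fun v => ?_⟩, (aux_weight_sum hT).symm⟩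
    exact (aux_identity' hT v).ge
  · rintro s ⟨x, ⟨hx0, hx⟩, rfl⟩
    rw [← aux_duality hT x, ← aux_weight_sum hT]
    apply Finset.sum_le_sum
    intro v _
    exact le_mul_of_one_le_right (hnn v) (hx v)

lemma expw_pos {V : Type*} (G : SimpleGraph V) (u v : V) : 0 < expw G u v := by
  unfold expw; positivity

lemma halfPow_mdist_le {V : Type*} (G : SimpleGraph V) (D : Finset V) (u v : V) :
    halfPow (mdist G D u v) ≤ expw G u v := by
  unfold halfPow
  split_ifs with h
  · exact (expw_pos G u v).le
  · unfold expw
    have h1 : (G.dist u v : ℕ∞) ≤ mdist G D u v := by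
      apply le_sInf
      rintro _ ⟨p, _, rfl⟩
      exact Nat.cast_le.2 (dist_le p)
    have h2 : G.dist u v ≤ (mdist G D u v).toNat := by
      rw [← ENat.natCast_toNat h] at h1
      exact_mod_cast h1
    have := pow_le_pow_of_le_one (a := (1 / 2 : ℝ)) (by norm_num) (by norm_num) h2
    linarith

lemma exists_path_of_halfPow_eq {V : Type*} (G : SimpleGraph V) (D : Finset V) (u v : V)
    (h : halfPow (mdist G D u v) = expw G u v) :
    ∃ p : G.Walk u v, p.IsPath ∧ ∀ w ∈ p.support, w ∈ D → w = v := by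
  by_contra hcon
  have : mdist G D u v = ⊤ := by
    unfold mdist
    rw [sInf_eq_top]
    rintro _ ⟨p, ⟨hp, _, hq⟩, rfl⟩
    exact absurd ⟨p, hp, hq⟩ hcon
  have h2 := expw_pos G u v
  rw [← h, this] at h2
  simp [halfPow] at h2

lemma wblock_le_wstar {V : Type*} (G : SimpleGraph V) (D : Finset V) (u : V) :
    wblock G D u ≤ wstar G D u :=
  Finset.sum_le_sum fun v _ => halfPow_mdist_le G D u v

/-- An optimal exponential dominating set has weight one at each vertex of degree below three. -/
lemma aux_slack {V : Type*} [Fintype V] {G : SimpleGraph V} [DecidableRel G.Adj]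
    (hT : G.IsTree) (hsub : Subcubic G) {D : Finset V} (hD : IsExpDomSet G D)
    (hc : (D.card : ℝ) = (Fintype.card V + 2) / 6) (u : V) (hu : G.degree u < 3) :
    wblock G D u = 1 ∧ wstar G D u = 1 := by
  classical
  have hge : ∀ v, 1 ≤ wstar G D v := fun v => (hD v).trans (wblock_le_wstar G D v)
  have hw : ∀ v, ∑ w, expw G w v * (if w ∈ D then (1 : ℝ) else 0) = wstar G D v := by
    intro v
    simp only [mul_ite, mul_one, mul_zero, wstar]
    rw [← Finset.sum_filter, Finset.filter_univ_mem]
    exact Finset.sum_congr rfl fun _ _ => expw_comm _ _ _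
  have hdual := aux_duality hT (fun w => if w ∈ D then (1 : ℝ) else 0)
  simp only [hw] at hdual
  have hcard : ∑ w, (if w ∈ D then (1 : ℝ) else 0) = D.card := by simp
  rw [hcard, hc, ← aux_weight_sum hT] at hdual
  have hnn : ∀ u, (0 : ℝ) ≤ (3 - G.degree u) / 6 := by
    intro u
    have : (G.degree u : ℝ) ≤ 3 := by exact_mod_cast hsub u
    linarith
  have heq := (Finset.sum_eq_sum_iff_of_le (fun v _ =>
    le_mul_of_one_le_right (hnn v) (hge v))).1 hdual.symm u (Finset.mem_univ u)
  have hpos : (0 : ℝ) < (3 - G.degree u) / 6 := by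
    have : (G.degree u : ℝ) < 3 := by exact_mod_cast hu
    linarith
  have h1 : wstar G D u = 1 := by
    have := mul_left_cancel₀ hpos.ne' ((mul_one _).trans heq)
    exact this.symm
  exact ⟨le_antisymm (h1 ▸ wblock_le_wstar G D u) (hD u), h1⟩

/-- Beyond any vertex `v`, seen from `a ≠ v`, there is a leaf. -/
lemma aux_leaf {V : Type*} [Fintype V] {G : SimpleGraph V} [DecidableRel G.Adj]
    (hT : G.IsTree) {a v : V} (hav : a ≠ v) :
    ∃ u, G.degree u < 3 ∧ G.dist a v + G.dist v u = G.dist a u := by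
  classical
  obtain ⟨u, hu, hmax⟩ := Finset.exists_max_image
    (univ.filter fun u => G.dist a v + G.dist v u = G.dist a u) (fun u => G.dist a u)
    ⟨v, by simp⟩
  simp only [Finset.mem_filter, Finset.mem_univ, true_and] at hu hmax
  refine ⟨u, ?_, hu⟩
  by_contra hdeg
  have hua : u ≠ a := by
    rintro rfl
    have := hT.connected.pos_dist_of_ne hav
    rw [dist_self] at hu
    omega
  obtain ⟨p, hadj, hp, hall⟩ := aux_parent hT hua
  have : ∃ w ∈ G.neighborFinset u, w ≠ p := by
    apply Finset.exists_mem_ne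
    rw [card_neighborFinset_eq_degree]; omega
  obtain ⟨w, hw, hwp⟩ := this
  rw [mem_neighborFinset] at hw
  have h1 := hall w hw hwp
  have h2 : G.dist a w ≤ G.dist a v + G.dist v w := hT.connected.dist_triangle
  have h3 : G.dist v w ≤ G.dist v u + G.dist u w := hT.connected.dist_triangle
  rw [dist_eq_one_iff_adj.2 hw] at h3
  have := hmax w (by omega)
  omega

lemma aux_star {V : Type*} [Fintype V] {G : SimpleGraph V} [DecidableRel G.Adj]
    (hT : G.IsTree) (c : V) (hc : G.degree c = 3) (hcard : Fintype.card V = 4) :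
    Nonempty (G ≃g completeBipartiteGraph (Fin 1) (Fin 3)) := by
  classical
  have hN : G.neighborFinset c = univ.erase c := by
    apply Finset.eq_of_subset_of_card_le
    · intro w hw
      rw [mem_neighborFinset] at hw
      simp [hw.ne']
    · rw [Finset.card_erase_of_mem (Finset.mem_univ _), Finset.card_univ, hcard,
        card_neighborFinset_eq_degree, hc]
  have hadj : ∀ w, w ≠ c → G.Adj c w := by
    intro w hw
    rw [← mem_neighborFinset, hN]; simp [hw]
  have hnadj : ∀ w w', w ≠ c → w' ≠ c → ¬ G.Adj w w' := by
    intro w w' hw hw' h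
    apply hT.dist_ne_of_adj c h
    rw [dist_eq_one_iff_adj.2 (hadj w hw), dist_eq_one_iff_adj.2 (hadj w' hw')]
  have e1 : {a : V // a = c} ≃ Fin 1 := Fintype.equivFinOfCardEq (by simp)
  have e2 : {a : V // ¬ a = c} ≃ Fin 3 := Fintype.equivFinOfCardEq (by
    rw [Fintype.card_subtype_compl, hcard]; simp)
  let e : V ≃ Fin 1 ⊕ Fin 3 := (Equiv.sumCompl (fun a => a = c)).symm.trans (e1.sumCongr e2)
  have hl : (e c) = Sum.inl (e1 ⟨c, rfl⟩) := by
    simp [e]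
  have hr : ∀ w (h : ¬ w = c), (e w) = Sum.inr (e2 ⟨w, h⟩) := by
    intro w h
    simp [e, Equiv.sumCompl_symm_apply_of_neg, h]
  refine ⟨⟨e, ?_⟩⟩
  intro a b
  by_cases ha : a = c <;> by_cases hb : b = c
  · subst ha; subst hb; simp
  · subst ha; rw [hl, hr b hb]; simp [hadj b hb]
  · subst hb; rw [hl, hr a ha]; simp [(hadj a ha).symm]
  · rw [hr a ha, hr b hb]; simp [hnadj a b ha hb]

lemma aux_forward {V : Type*} [Fintype V] {G : SimpleGraph V} [DecidableRel G.Adj]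
    (hT : G.IsTree) (hsub : Subcubic G) {D : Finset V} (hD : IsExpDomSet G D)
    (hc : (D.card : ℝ) = (Fintype.card V + 2) / 6) :
    Nonempty (G ≃g completeBipartiteGraph (Fin 1) (Fin 3)) := by
  classical
  have hself : ∀ v ∈ D, G.degree v = 3 := by
    intro v hv
    by_contra hne
    have hlt : G.degree v < 3 := lt_of_le_of_ne (hsub v) hne
    have h1 := (aux_slack hT hsub hD hc v hlt).2
    have h2 : expw G v v ≤ wstar G D v :=
      Finset.single_le_sum (f := fun w => expw G v w) (fun w _ => (expw_pos G v w).le) hv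
    rw [h1] at h2
    simp [expw] at h2
  have hone : D.card ≤ 1 := by
    rw [Finset.card_le_one]
    intro a ha v hv
    by_contra hav
    obtain ⟨u, hu, hd⟩ := aux_leaf hT hav
    obtain ⟨h1, h2⟩ := aux_slack hT hsub hD hc u hu
    have h3 : wblock G D u = wstar G D u := h1.trans h2.symm
    have h4 := (Finset.sum_eq_sum_iff_of_le (fun w _ => halfPow_mdist_le G D u w)).1 h3 a ha
    obtain ⟨p, hp, hall⟩ := exists_path_of_halfPow_eq G D u a h4
    have hmem : v ∈ p.support := by
      apply aux_mem_support hT _ p hp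
      rw [@dist_comm _ G u v, @dist_comm _ G v a, @dist_comm _ G u a]
      omega
    exact hav (hall v hmem hv).symm
  have hpos : 0 < D.card := by
    have : (0 : ℝ) < D.card := by rw [hc]; positivity
    exact_mod_cast this
  have hone' : D.card = 1 := by omega
  obtain ⟨c, rfl⟩ := Finset.card_eq_one.1 hone'
  have hcard : Fintype.card V = 4 := by
    rw [hone'] at hc
    have : (Fintype.card V : ℝ) = 4 := by push_cast at hc; linarith
    exact_mod_cast this
  exact aux_star hT c (hself c (by simp)) hcard

lemma aux_backward {V : Type*} [Fintype V] {G : SimpleGraph V}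
    (f : G ≃g completeBipartiteGraph (Fin 1) (Fin 3)) : gammaE G = 1 := by
  classical
  let c : V := f.symm (Sum.inl 0)
  have hadj : ∀ u, u ≠ c → G.Adj u c := by
    intro u hu
    rw [← f.map_adj_iff]
    have hfc : f c = Sum.inl 0 := by simp [c]
    rw [hfc]
    rcases hfu : f u with i | j
    · exfalso
      apply hu
      have : i = 0 := Subsingleton.elim _ _
      rw [this, ← hfc] at hfu
      exact f.injective hfu
    · simp
  have hm : ∀ u, mdist G {c} u c ≤ 1 := by
    intro u
    by_cases hu : u = c
    · rw [← hu]
      refine le_trans (b := ((Walk.nil : G.Walk u u).length : ℕ∞))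
        (sInf_le ⟨Walk.nil, ⟨by simp, by simp, by simp⟩, rfl⟩) ?_
      simp
    · have h := hadj u hu
      refine le_trans (b := ((Walk.cons h Walk.nil).length : ℕ∞))
        (sInf_le ⟨Walk.cons h Walk.nil, ⟨?_, by simp, ?_⟩, rfl⟩) ?_
      · simp [hu]
      · intro w _ hw; simpa using hw
      · simp
  have hdom : IsExpDomSet G {c} := by
    intro u
    rw [wblock, Finset.sum_singleton]
    have h := hm u
    have hne : mdist G {c} u c ≠ ⊤ := ne_top_of_le_ne_top (by simp) h
    rw [halfPow, if_neg hne]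
    have h2 : (mdist G {c} u c).toNat ≤ 1 := by
      rw [← ENat.natCast_toNat hne] at h
      exact_mod_cast h
    have := pow_le_pow_of_le_one (a := (1 / 2 : ℝ)) (by norm_num) (by norm_num) h2
    linarith
  have hmem : (1 : ℕ) ∈ {k | ∃ D : Finset V, IsExpDomSet G D ∧ D.card = k} :=
    ⟨{c}, hdom, by simp⟩
  apply le_antisymm (Nat.sInf_le hmem)
  apply le_csInf ⟨1, hmem⟩
  rintro k ⟨D, hD, rfl⟩
  by_contra hlt
  have h0 : D = ∅ := Finset.card_eq_zero.1 (by omega)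
  have := hD c
  rw [h0, wblock] at this
  simp at this
  norm_num at this

/-- If `T` is a subcubic tree, then `γ_e(T) = γ*_{e,f}(T)` if and only if `T` is `K_{1,3}`. -/
theorem stmt_10 {V : Type*} [Fintype V] (G : SimpleGraph V) [DecidableRel G.Adj]
    (hT : G.IsTree) (hsub : Subcubic G) :
    (gammaE G : ℝ) = gammaEF G ↔
      Nonempty (G ≃g completeBipartiteGraph (Fin 1) (Fin 3)) := by
  rw [aux_gammaEF hT hsub]
  constructor
  · intro h
    have hpos : 0 < gammaE G := by
      have : (0 : ℝ) < gammaE G := by rw [h]; positivity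
      exact_mod_cast this
    obtain ⟨D, hD, hc⟩ := Nat.sInf_mem (Nat.nonempty_of_pos_sInf hpos)
    apply aux_forward hT hsub hD
    rw [hc]
    exact h
  · rintro ⟨f⟩
    have hcard : Fintype.card V = 4 := by
      rw [Fintype.card_congr f.toEquiv]; simp
    rw [aux_backward f, hcard]
    norm_num
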